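/- arXiv:2406.14687 — 2 statements merged into one kernel-verified Lean document; each statement's English description precedes it below -/
import Mathlib

section
/- Let s be an n×m complex matrix with sᴴ * s = 1ₘ (where sᴴ denotes the conjugate transpose), and let g be an m×m unitary matrix. Then the n×n matrix 1ₙ + s * (g − 1ₘ) * sᴴ is unitary. -/
open Matrix

/-- If `s` is an `n × m` complex matrix with `sᴴ * s = 1ₘ` and `g` is an `m × m` unitary
matrix, then `1 + s * (g - 1) * sᴴ` is an `n × n` unitary matrix. -/
theorem stmt_4 {m n : ℕ} (s : Matrix (Fin n) (Fin m) ℂ) (hs : sᴴ * s = 1)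
    (g : Matrix (Fin m) (Fin m) ℂ) (hg : g ∈ Matrix.unitaryGroup (Fin m) ℂ) :
    (1 + s * (g - 1) * sᴴ) ∈ Matrix.unitaryGroup (Fin n) ℂ := by
  rw [Matrix.mem_unitaryGroup_iff] at hg ⊢
  rw [Matrix.star_eq_conjTranspose] at hg ⊢
  have hA : (g - 1) + (gᴴ - 1) + (g - 1) * (gᴴ - 1) = 0 := by
    have : (g - 1) * (gᴴ - 1) = g * gᴴ - g - gᴴ + 1 := by noncomm_ring
    rw [this, hg]
    abel
  have h1 : (1 + s * (g - 1) * sᴴ)ᴴ = 1 + s * (gᴴ - 1) * sᴴ := by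
    simp [Matrix.conjTranspose_mul, Matrix.mul_assoc]
  have h2 : s * (g - 1) * sᴴ * (s * (gᴴ - 1) * sᴴ) = s * ((g - 1) * (gᴴ - 1)) * sᴴ := by
    calc _ = s * (g - 1) * (sᴴ * s) * (gᴴ - 1) * sᴴ := by simp only [Matrix.mul_assoc]
      _ = _ := by rw [hs, Matrix.mul_one]; simp only [Matrix.mul_assoc]
  rw [h1]
  calc (1 + s * (g - 1) * sᴴ) * (1 + s * (gᴴ - 1) * sᴴ)
      = 1 + (s * (g - 1) * sᴴ + s * (gᴴ - 1) * sᴴ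
          + s * (g - 1) * sᴴ * (s * (gᴴ - 1) * sᴴ)) := by
        rw [add_mul, one_mul, mul_add (s * (g - 1) * sᴴ), mul_one]; abel
    _ = 1 + s * ((g - 1) + (gᴴ - 1) + (g - 1) * (gᴴ - 1)) * sᴴ := by
        rw [h2, Matrix.mul_add, Matrix.mul_add, Matrix.add_mul, Matrix.add_mul]
    _ = 1 := by rw [hA]; simp
end

section
/- Let E be an n-dimensional complex inner product space, let A be a unitary operator on E, and let m ≤ n. Then the dimension of ker(A − id) is at least n − m if and only if there exists a subspace V of E with dim V = m such that A maps V onto V and A x = x for every x in the orthogonal complement Vᗮ. -/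
/-- For a unitary operator `A` on an `n`-dimensional complex inner product space `E` and
`m ≤ n`: `dim ker (A - id) ≥ n - m` iff there is an `m`-dimensional subspace `V` of `E`
with `A(V) = V` and `A x = x` for all `x ∈ Vᗮ`. -/
theorem stmt_6 {E : Type*} [NormedAddCommGroup E] [InnerProductSpace ℂ E]
    [FiniteDimensional ℂ E] {n m : ℕ} (hn : Module.finrank ℂ E = n) (hmn : m ≤ n)
    (A : E ≃ₗᵢ[ℂ] E) :
    n - m ≤ Module.finrank ℂ
        (LinearMap.ker ((A.toLinearEquiv : E →ₗ[ℂ] E) - LinearMap.id)) ↔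
      ∃ V : Submodule ℂ E, Module.finrank ℂ V = m ∧
        Submodule.map (A.toLinearEquiv : E →ₗ[ℂ] E) V = V ∧
        ∀ x ∈ Vᗮ, A x = x := by
  set K := LinearMap.ker ((A.toLinearEquiv : E →ₗ[ℂ] E) - LinearMap.id) with hK
  have memK : ∀ x, x ∈ K ↔ A x = x := by
    intro x
    simp [hK, LinearMap.mem_ker, sub_eq_zero]
  constructor
  · intro h
    obtain ⟨f, hf⟩ := exists_linearIndependent_of_le_finrank h
    have hf' : LinearIndependent ℂ (fun i => (f i : E)) :=
      hf.map' K.subtype (Submodule.ker_subtype K)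
    let W : Submodule ℂ E := Submodule.span ℂ (Set.range fun i => (f i : E))
    have hWK : W ≤ K := by
      refine Submodule.span_le.2 ?_
      rintro _ ⟨i, rfl⟩
      exact (f i).2
    have hWd : Module.finrank ℂ W = n - m := by
      simpa using finrank_span_eq_card hf'
    have hV : Module.finrank ℂ Wᗮ = m := by
      have := Submodule.finrank_add_finrank_orthogonal W
      omega
    refine ⟨Wᗮ, hV, ?_, ?_⟩
    · apply Submodule.eq_of_le_of_finrank_eq
      · rintro _ ⟨v, hv, rfl⟩
        rw [Submodule.mem_orthogonal]
        intro w hw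
        have h1 := A.inner_map_map w v
        rw [(memK w).1 (hWK hw), (Submodule.mem_orthogonal W v).1 hv w hw] at h1
        exact h1
      · exact LinearEquiv.finrank_map_eq A.toLinearEquiv Wᗮ
    · intro x hx
      rw [Submodule.orthogonal_orthogonal] at hx
      exact (memK x).1 (hWK hx)
  · rintro ⟨V, hV, -, hx⟩
    have h1 : Vᗮ ≤ K := fun x h => (memK x).2 (hx x h)
    have h2 := Submodule.finrank_mono h1
    have h3 := Submodule.finrank_add_finrank_orthogonal V
    omega
end
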